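/- Let f(u) = u⁸ − 9u⁷ + 123u⁶ + 54u⁵ + 861u⁴ − 5130u³ + 11250u² − 9882u + 3357 ∈ ℚ[u], and let K be the splitting field of f over ℚ. Then K is a Galois extension of ℚ of degree 8, and Gal(K/ℚ) is isomorphic to the dihedral group D₈ of order 8. -/

import Mathlib

open Polynomial

/-! The roots of `f` are built out of those of the Eisenstein quartic `X⁴ - 3X² - 3`. Its roots in
`ℂ` are `±α, ±β` with `α` real, `α² = (3 + √21)/2` and `β² = 3 - α² < 0`; consequently
`(αβ)² = -3`. For `u = ±α` and `t = ±αβ` put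
`θ(u, t) = -7/4 u + 3/4 u² + 3/4 u³ - (5/4 u + 3/4 u² + 1/12 u³) t`.
For fixed `A = α²` the product of `x - θ(u, t)` over the four choices of signs is a quartic in `x`
with coefficients in `ℚ(√21)` (`half_eq`); multiplying it by its conjugate, which belongs to
`3 - A = β²`, gives `f(x)` (`f_eq_mul`). Hence the roots of `f` lie in `ℚ(α, β)`.
Conversely, sums and differences of the `θ(u, t)` recover `α` and `αβ` (`mem_of_theta_mem`). So `f`
and the quartic have the same splitting field `ℚ(α, β)` in `ℂ`.

The quartic is irreducible, so `ℚ(α)` has degree 4; it is real while `β` is not, so `ℚ(α, β)` has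
degree 8 (`finrank_adjoin_pair`). The Galois group therefore has order 8 and acts faithfully on the
four roots of the quartic. A subgroup of order 8 of `S₄` is a Sylow 2-subgroup, and so is the image
of the symmetries of the square; as Sylow subgroups are conjugate, the two are isomorphic
(`nonempty_mulEquiv_dihedral`). -/

/-! ### Groups of order 8 acting faithfully on four points -/

/-- The symmetries of a square acting on its vertices, labelled by `ZMod 4`. -/
def dihedralPerm : DihedralGroup 4 →* Equiv.Perm (ZMod 4) :=
  MonoidHom.mk' (fun g => match g with
    | .r i => Equiv.addRight i
    | .sr i => Equiv.subLeft (-i)) (by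
      rintro (i | i) (j | j) <;> ext x <;> revert i j x <;> decide)

lemma dihedralPerm_injective : Function.Injective dihedralPerm := by
  rw [injective_iff_map_eq_one]
  have key : ∀ a : DihedralGroup 4,
      (∀ x : ZMod 4, dihedralPerm a x = x) → a = 1 := by
    rintro (i | i) <;> revert i <;> decide
  intro a ha
  exact key a fun x => by rw [ha]; rfl

lemma nonempty_mulEquiv_dihedral {G Ω : Type*} [Group G] (hG : Nat.card G = 8)
    (hΩ : Nat.card Ω = 4) (φ : G →* Equiv.Perm Ω) (hφ : Function.Injective φ) :
    Nonempty (G ≃* DihedralGroup 4) := by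
  have : Finite Ω := Nat.finite_of_card_ne_zero (by omega)
  obtain ⟨e⟩ : Nonempty (Ω ≃ ZMod 4) :=
    Finite.card_eq.1 (by rw [hΩ, Nat.card_zmod])
  let ψ : G →* Equiv.Perm (ZMod 4) := e.permCongrHom.toMonoidHom.comp φ
  have hψ : Function.Injective ψ := e.permCongrHom.injective.comp hφ
  have h24 : Nat.card (Equiv.Perm (ZMod 4)) = 2 ^ 3 * 3 := by
    rw [Nat.card_perm, Nat.card_zmod]; rfl
  have hfac : 2 ^ (Nat.card (Equiv.Perm (ZMod 4))).factorization 2 = 8 := by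
    have : Nat.factorization 3 2 = 0 := Nat.factorization_eq_zero_of_not_dvd (by norm_num)
    rw [h24, Nat.factorization_mul (by norm_num) (by norm_num), Nat.Prime.factorization_pow
      Nat.prime_two]
    simp [this]
  have c1 : Nat.card ψ.range = 8 := by
    rw [← hG]; exact (Nat.card_congr (ψ.ofInjective hψ).toEquiv).symm
  have c2 : Nat.card dihedralPerm.range = 8 := by
    rw [← Nat.card_congr (dihedralPerm.ofInjective dihedralPerm_injective).toEquiv,
      DihedralGroup.nat_card]
  let P := Sylow.ofCard (p := 2) ψ.range (by rw [c1, hfac])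
  let Q := Sylow.ofCard (p := 2) dihedralPerm.range (by rw [c2, hfac])
  have e3 : ψ.range ≃* dihedralPerm.range := P.equiv Q
  exact ⟨(ψ.ofInjective hψ).trans
    (e3.trans (dihedralPerm.ofInjective dihedralPerm_injective).symm)⟩

/-! ### The Eisenstein quartic -/

/-- The quartic whose splitting field coincides with that of `f`. -/
noncomputable def quartic : ℚ[X] := X ^ 4 - 3 * X ^ 2 - 3

lemma quartic_monic : quartic.Monic := by
  unfold quartic; monicity!

lemma quartic_natDegree : quartic.natDegree = 4 := by
  unfold quartic; compute_degree!

lemma quartic_irreducible : Irreducible quartic := by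
  let p : ℤ[X] := X ^ 4 - 3 * X ^ 2 - 3
  have hp : p.Monic := by simp only [p]; monicity!
  have hd : p.natDegree = 4 := by simp only [p]; compute_degree!
  have hprime : (Ideal.span {(3 : ℤ)}).IsPrime :=
    (Ideal.span_singleton_prime (by norm_num)).2 Int.prime_three
  have h0 : p.coeff 0 = -3 := by simp [p, coeff_zero_eq_eval_zero]
  have hirr : Irreducible p := by
    refine irreducible_of_eisenstein_criterion hprime ?_ ?_ ?_ ?_ hp.isPrimitive
    · rw [hp.leadingCoeff, Ideal.mem_span_singleton]; norm_num
    · intro n hn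
      have hn' : n < 4 := by
        rw [degree_eq_natDegree hp.ne_zero, hd] at hn; exact_mod_cast hn
      have e : p = X ^ 4 - C 3 * (X ^ 2 + 1) := by simp only [p, map_ofNat]; ring
      rw [Ideal.mem_span_singleton, e, coeff_sub, coeff_X_pow, if_neg (by omega), coeff_C_mul]
      exact ⟨-(X ^ 2 + 1 : ℤ[X]).coeff n, by ring⟩
    · rw [degree_eq_natDegree hp.ne_zero, hd]; norm_num
    · rw [h0, Ideal.span_singleton_pow, Ideal.mem_span_singleton]; norm_num
  have := (hp.irreducible_iff_irreducible_map_fraction_map (K := ℚ)).1 hirr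
  have e : p.map (algebraMap ℤ ℚ) = quartic := by simp [p, quartic]
  rwa [e] at this

lemma aeval_quartic (x : ℂ) : aeval x quartic = x ^ 4 - 3 * x ^ 2 - 3 := by
  simp [quartic, aeval_def]

/-! ### The roots of `f` in terms of the roots of the quartic -/

/-- The roots of `f`, as functions of a root `u` of the quartic and a square root `t` of `-3`. -/
noncomputable def theta (u t : ℂ) : ℂ :=
  -7/4 * u + 3/4 * u ^ 2 + 3/4 * u ^ 3 - (5/4 * u + 3/4 * u ^ 2 + 1/12 * u ^ 3) * t

/-- The quartic factor of `f` over `ℚ(√21)` attached to `A = u²`, a root of `A² - 3A - 3`. -/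
noncomputable def half (A x : ℂ) : ℂ :=
  x ^ 4 - 3 * A * x ^ 3 + (30 + 30 * A) * x ^ 2 - (54 + 36 * A) * x + 48 + 9 * A

lemma theta_pair {u t : ℂ} (hu : u ^ 4 = 3 * u ^ 2 + 3) (ht : t ^ 2 = -3) (x : ℂ) :
    (x - theta u t) * (x - theta u (-t)) =
      x ^ 2 + (7/2 * u - 3/2 * u ^ 2 - 3/2 * u ^ 3) * x
        + (6 + 9/2 * u + 31/2 * u ^ 2 + 15/2 * u ^ 3) := by
  unfold theta
  linear_combination (2 + 3/2 * u + 7/12 * u ^ 2) * hu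
    - (5/4 * u + 3/4 * u ^ 2 + 1/12 * u ^ 3) ^ 2 * ht

lemma half_eq {u t : ℂ} (hu : u ^ 4 = 3 * u ^ 2 + 3) (ht : t ^ 2 = -3) (x : ℂ) :
    half (u ^ 2) x = (x - theta u t) * (x - theta u (-t)) *
      ((x - theta (-u) t) * (x - theta (-u) (-t))) := by
  rw [theta_pair hu ht, theta_pair (u := -u) (by linear_combination hu) ht]
  unfold half
  linear_combination -(4 - 225/4 * u ^ 2 + (-18 + 45/2 * u ^ 2) * x
    + (6 - 9/4 * u ^ 2) * x ^ 2) * hu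

lemma f_eq_mul {A : ℂ} (hA : A ^ 2 = 3 * A + 3) (x : ℂ) :
    x^8 - 9*x^7 + 123*x^6 + 54*x^5 + 861*x^4 - 5130*x^3 + 11250*x^2 - 9882*x + 3357
      = half A x * half (3 - A) x := by
  unfold half
  linear_combination -(-81 + 648 * x - 1836 * x ^ 2 + 2214 * x ^ 3 - 1116 * x ^ 4 + 180 * x ^ 5
    - 9 * x ^ 6) * hA

/-- Averaging `θ(±u, ±t)` isolates the even and odd parts in `u` and `t`, which give back `u`
and `t`. -/
lemma mem_of_theta_mem {K : IntermediateField ℚ ℂ} {u t : ℂ} (hu : u ^ 4 = 3 * u ^ 2 + 3)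
    (h1 : theta u t ∈ K) (h2 : theta u (-t) ∈ K) (h3 : theta (-u) t ∈ K)
    (h4 : theta (-u) (-t) ∈ K) : u ∈ K ∧ t ∈ K := by
  have hq (n : ℕ) : (n : ℂ) ∈ K := natCast_mem K n
  have hA : u ^ 2 ∈ K := by
    have : u ^ 2 = (theta u t + theta u (-t) + theta (-u) t + theta (-u) (-t)) / (3 : ℕ) := by
      unfold theta; push_cast; ring
    rw [this]
    exact div_mem (add_mem (add_mem (add_mem h1 h2) h3) h4) (hq _)
  have hA0 : u ^ 2 ≠ 0 := by
    intro h
    have : (3 : ℂ) = 0 := by linear_combination -hu + (u ^ 2 - 3) * h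
    norm_num at this
  -- `7/3` is not a root of `A² - 3A - 3`
  have hA1 : 3 * u ^ 2 - 7 ≠ 0 := by
    intro h
    have : (41 : ℂ) = 0 := by linear_combination -9 * hu + (3 * u ^ 2 - 2) * h
    norm_num at this
  constructor
  · have : u = (theta u t + theta u (-t) - theta (-u) t - theta (-u) (-t))
        / ((3 : ℕ) * u ^ 2 - (7 : ℕ)) := by
      rw [eq_div_iff (by exact_mod_cast hA1)]; unfold theta; push_cast; ring
    rw [this]
    exact div_mem (sub_mem (sub_mem (add_mem h1 h2) h3) h4)
      (sub_mem (mul_mem (hq _) hA) (hq _))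
  · have : t = (theta u (-t) + theta (-u) (-t) - theta u t - theta (-u) t)
        / ((3 : ℕ) * u ^ 2) := by
      rw [eq_div_iff (mul_ne_zero (by norm_num) hA0)]; unfold theta; push_cast; ring
    rw [this]
    exact div_mem (sub_mem (sub_mem (add_mem h2 h4) h1) h3) (mul_mem (hq _) hA)

/-! ### The degree of the splitting field -/

/-- A real root `r` of the quartic, together with a square root of the negative number `3 - r²`. -/
lemma exists_roots : ∃ (r : ℝ) (β : ℂ), (r : ℂ) ^ 4 = 3 * (r : ℂ) ^ 2 + 3 ∧
    β ^ 2 = 3 - (r : ℂ) ^ 2 ∧ ∀ y : ℝ, (y : ℂ) ≠ β := by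
  have h21 : (√21 : ℝ) ^ 2 = 21 := Real.sq_sqrt (by norm_num)
  have hpos : (0 : ℝ) ≤ √21 := Real.sqrt_nonneg _
  set r : ℝ := √((3 + √21) / 2) with hr
  have hr2 : r ^ 2 = (3 + √21) / 2 := Real.sq_sqrt (by positivity)
  obtain ⟨β, hβ⟩ := IsAlgClosed.exists_pow_nat_eq (3 - (r : ℂ) ^ 2) (n := 2) (by norm_num)
  refine ⟨r, β, ?_, hβ, ?_⟩
  · have : r ^ 4 = 3 * r ^ 2 + 3 := by
      rw [show r ^ 4 = (r ^ 2) ^ 2 by ring, hr2]; nlinarith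
    exact_mod_cast this
  · rintro y rfl
    have : y ^ 2 = 3 - r ^ 2 := by exact_mod_cast hβ
    nlinarith [sq_nonneg y]

open IntermediateField in
lemma finrank_adjoin_pair {r : ℝ} {β : ℂ} (hr : (r : ℂ) ^ 4 = 3 * (r : ℂ) ^ 2 + 3)
    (hβ : β ^ 2 = 3 - (r : ℂ) ^ 2) (hreal : ∀ y : ℝ, (y : ℂ) ≠ β) :
    Module.finrank ℚ ℚ⟮(r : ℂ), β⟯ = 8 := by
  have hmin : minpoly ℚ (r : ℂ) = quartic :=
    (minpoly.eq_of_irreducible_of_monic quartic_irreducible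
      (by rw [aeval_quartic, hr]; ring) quartic_monic).symm
  have hint : IsIntegral ℚ (r : ℂ) :=
    ⟨quartic, quartic_monic, by rw [← aeval_def, aeval_quartic, hr]; ring⟩
  have h4 : Module.finrank ℚ ℚ⟮(r : ℂ)⟯ = 4 := by
    rw [adjoin.finrank hint, hmin, quartic_natDegree]
  have hsub : ∀ z ∈ ℚ⟮(r : ℂ)⟯, ∃ y : ℝ, (y : ℂ) = z := by
    have : ℚ⟮(r : ℂ)⟯ ≤ (Complex.ofRealAm.restrictScalars ℚ).fieldRange := by
      rw [adjoin_simple_le_iff]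
      exact ⟨r, rfl⟩
    intro z hz
    exact this hz
  let c : ℚ⟮(r : ℂ)⟯ := 3 - AdjoinSimple.gen ℚ (r : ℂ) ^ 2
  have hc : (c : ℂ) = 3 - (r : ℂ) ^ 2 := by
    simp only [c, AddSubgroupClass.coe_sub, SubmonoidClass.coe_pow, AdjoinSimple.coe_gen]; rfl
  have hmon : (X ^ 2 - C c).Monic := monic_X_pow_sub_C c (by norm_num)
  have hirr : Irreducible (X ^ 2 - C c) := by
    refine irreducible_of_degree_le_three_of_not_isRoot (by simp) fun z hz => ?_
    have hz' : (z : ℂ) ^ 2 = β ^ 2 := by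
      have : z ^ 2 = c := by simpa [IsRoot, sub_eq_zero] using hz
      rw [hβ, ← hc, ← this]; rfl
    obtain ⟨y, hy⟩ := hsub z z.2
    rcases sq_eq_sq_iff_eq_or_eq_neg.1 hz' with h | h
    · exact hreal y (hy.trans h)
    · exact hreal (-y) (by push_cast; rw [hy, h, neg_neg])
  have hroot : aeval β (X ^ 2 - C c) = 0 := by
    have : algebraMap ℚ⟮(r : ℂ)⟯ ℂ c = 3 - (r : ℂ) ^ 2 := hc
    simp [this, hβ]
  have hmin2 := minpoly.eq_of_irreducible_of_monic hirr hroot hmon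
  have h2 : Module.finrank ℚ⟮(r : ℂ)⟯ ℚ⟮(r : ℂ)⟯⟮β⟯ = 2 := by
    rw [adjoin.finrank ⟨_, hmon, hroot⟩, ← hmin2, natDegree_X_pow_sub_C]
  have := Module.finrank_mul_finrank ℚ ℚ⟮(r : ℂ)⟯ ℚ⟮(r : ℂ)⟯⟮β⟯
  rw [h4, h2] at this
  rw [← adjoin_simple_adjoin_simple]
  exact this.symm

/-! ### The two splitting fields in `ℂ` coincide -/

lemma adjoin_quartic {α β : ℂ} (hα : α ^ 4 = 3 * α ^ 2 + 3) (hβ : β ^ 2 = 3 - α ^ 2) :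
    IntermediateField.adjoin ℚ (quartic.rootSet ℂ) = IntermediateField.adjoin ℚ {α, β} := by
  have hmem (x : ℂ) : x ∈ quartic.rootSet ℂ ↔ x ^ 4 - 3 * x ^ 2 - 3 = 0 := by
    rw [mem_rootSet_of_ne quartic_monic.ne_zero, aeval_quartic]
  apply le_antisymm <;> rw [IntermediateField.adjoin_le_iff]
  · intro x hx
    rw [hmem] at hx
    have h : (x ^ 2 - α ^ 2) * (x ^ 2 - β ^ 2) = 0 := by
      rw [hβ]; linear_combination hx - hα
    have ha : α ∈ IntermediateField.adjoin ℚ {α, β} :=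
      IntermediateField.subset_adjoin _ _ (by simp)
    have hb : β ∈ IntermediateField.adjoin ℚ {α, β} :=
      IntermediateField.subset_adjoin _ _ (by simp)
    rcases mul_eq_zero.1 h with h | h <;>
      rcases sq_eq_sq_iff_eq_or_eq_neg.1 (sub_eq_zero.1 h) with rfl | rfl
    exacts [ha, neg_mem ha, hb, neg_mem hb]
  · rintro x (rfl | rfl) <;> apply IntermediateField.subset_adjoin <;> rw [hmem]
    · rw [hα]; ring
    · linear_combination hα + (x ^ 2 - α ^ 2) * hβ

lemma adjoin_f {f : ℚ[X]}
    (hf : f = X^8 - 9*X^7 + 123*X^6 + 54*X^5 + 861*X^4 - 5130*X^3 + 11250*X^2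
      - 9882*X + 3357) {α β : ℂ} (hα : α ^ 4 = 3 * α ^ 2 + 3) (hβ : β ^ 2 = 3 - α ^ 2) :
    IntermediateField.adjoin ℚ (f.rootSet ℂ) = IntermediateField.adjoin ℚ {α, β} := by
  have hf0 : f ≠ 0 := by
    have : f.Monic := by rw [hf]; monicity!
    exact this.ne_zero
  have hβ4 : β ^ 4 = 3 * β ^ 2 + 3 := by linear_combination hα + (β ^ 2 - α ^ 2) * hβ
  have ht : (α * β) ^ 2 = -3 := by linear_combination -hα + α ^ 2 * hβ
  have hmem (x : ℂ) : x ∈ f.rootSet ℂ ↔ half (α ^ 2) x * half (β ^ 2) x = 0 := by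
    rw [mem_rootSet_of_ne hf0, hβ, ← f_eq_mul (by linear_combination hα), hf]
    simp [aeval_def]
  have hαx := half_eq hα ht
  apply le_antisymm <;> rw [IntermediateField.adjoin_le_iff]
  · have ha : α ∈ IntermediateField.adjoin ℚ {α, β} :=
      IntermediateField.subset_adjoin _ _ (by simp)
    have hb : β ∈ IntermediateField.adjoin ℚ {α, β} :=
      IntermediateField.subset_adjoin _ _ (by simp)
    have hq (q : ℚ) : (q : ℂ) ∈ IntermediateField.adjoin ℚ {α, β} :=
      (IntermediateField.adjoin ℚ {α, β}).algebraMap_mem q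
    have hth {u t : ℂ} (hu : u ∈ IntermediateField.adjoin ℚ {α, β})
        (ht : t ∈ IntermediateField.adjoin ℚ {α, β}) :
        theta u t ∈ IntermediateField.adjoin ℚ {α, β} := by
      have : theta u t = (-7/4 : ℚ) * u + (3/4 : ℚ) * u ^ 2 + (3/4 : ℚ) * u ^ 3
          - ((5/4 : ℚ) * u + (3/4 : ℚ) * u ^ 2 + (1/12 : ℚ) * u ^ 3) * t := by
        unfold theta; push_cast; ring
      rw [this]
      exact sub_mem
        (add_mem (add_mem (mul_mem (hq _) hu) (mul_mem (hq _) (pow_mem hu 2)))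
          (mul_mem (hq _) (pow_mem hu 3)))
        (mul_mem (add_mem (add_mem (mul_mem (hq _) hu) (mul_mem (hq _) (pow_mem hu 2)))
          (mul_mem (hq _) (pow_mem hu 3))) ht)
    have hab := mul_mem ha hb
    intro x hx
    rw [hmem, half_eq hα ht, half_eq hβ4 ht] at hx
    simp only [mul_eq_zero, sub_eq_zero] at hx
    rcases hx with ((rfl | rfl) | (rfl | rfl)) | ((rfl | rfl) | (rfl | rfl))
    exacts [hth ha hab, hth ha (neg_mem hab), hth (neg_mem ha) hab,
      hth (neg_mem ha) (neg_mem hab), hth hb hab, hth hb (neg_mem hab), hth (neg_mem hb) hab,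
      hth (neg_mem hb) (neg_mem hab)]
  · have hroot (x : ℂ) (hx : half (α ^ 2) x = 0) :
        x ∈ IntermediateField.adjoin ℚ (f.rootSet ℂ) :=
      IntermediateField.subset_adjoin _ _ (by rw [hmem, hx, zero_mul])
    obtain ⟨h1, h2⟩ := mem_of_theta_mem hα
      (hroot _ (by rw [hαx]; ring)) (hroot _ (by rw [hαx]; ring))
      (hroot (theta (-α) (α * β)) (by rw [hαx]; ring)) (hroot _ (by rw [hαx]; ring))
    have hα0 : α ≠ 0 := by rintro rfl; norm_num at hα
    rintro x (rfl | rfl)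
    · exact h1
    · have := div_mem h2 h1
      rwa [mul_div_cancel_left₀ _ hα0] at this

/-- The splitting field of the degree-8 polynomial defining the field of definition of
the quadritangents of `X₀(63)` is Galois over `ℚ` of degree 8 with Galois group the
dihedral group `D₈` of order 8. -/
theorem stmt_17 (f : ℚ[X])
    (hf : f = X^8 - 9*X^7 + 123*X^6 + 54*X^5 + 861*X^4 - 5130*X^3 + 11250*X^2
      - 9882*X + 3357) :
    IsGalois ℚ f.SplittingField ∧
    Module.finrank ℚ f.SplittingField = 8 ∧
    Nonempty (f.Gal ≃* DihedralGroup 4) := by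
  obtain ⟨r, β, hr, hβ, hreal⟩ := exists_roots
  have hfr := finrank_adjoin_pair hr hβ hreal
  have sf : f.IsSplittingField ℚ (IntermediateField.adjoin ℚ {(r : ℂ), β}) := by
    rw [← adjoin_f hf hr hβ]
    exact IntermediateField.adjoin_rootSet_isSplittingField (IsAlgClosed.splits _)
  have sg : quartic.IsSplittingField ℚ (IntermediateField.adjoin ℚ {(r : ℂ), β}) := by
    rw [← adjoin_quartic hr hβ]
    exact IntermediateField.adjoin_rootSet_isSplittingField (IsAlgClosed.splits _)
  let ef := IsSplittingField.algEquiv (IntermediateField.adjoin ℚ {(r : ℂ), β}) f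
  let eg := IsSplittingField.algEquiv (IntermediateField.adjoin ℚ {(r : ℂ), β}) quartic
  -- `IsGalois` carries the algebra structure of a field of characteristic zero, which instance search
  -- does not identify with the one of `SplittingField`; hence the explicit instance.
  have : Normal ℚ f.SplittingField := Normal.of_isSplittingField (hFEp := IsSplittingField.splittingField f)
  have hgal : IsGalois ℚ f.SplittingField := ⟨⟩
  have h8 : Module.finrank ℚ f.SplittingField = 8 := by
    rw [← hfr]; exact ef.symm.toLinearEquiv.finrank_eq
  refine ⟨hgal, h8, ?_⟩
  have hcard : Nat.card f.Gal = 8 := by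
    rw [← h8]; exact IsGalois.card_aut_eq_finrank ℚ f.SplittingField
  have hroots : Nat.card (quartic.rootSet ℂ) = 4 := by
    rw [Nat.card_eq_fintype_card, card_rootSet_eq_natDegree quartic_irreducible.separable
      (IsAlgClosed.splits _), quartic_natDegree]
  have : Fact ((quartic.map (algebraMap ℚ ℂ)).Splits) := ⟨IsAlgClosed.splits _⟩
  let e : f.Gal ≃* quartic.Gal := AlgEquiv.autCongr (ef.symm.trans eg)
  exact nonempty_mulEquiv_dihedral hcard hroots
    ((Gal.galActionHom quartic ℂ).comp e.toMonoidHom)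
    ((Gal.galActionHom_injective quartic ℂ).comp e.injective)
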